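/- Let d ≥ 1, let H : ℝ^d → ℝ be smooth, let D : ℝ^d → (d×d real matrices) be smooth with D(z) symmetric for every z, and let Q : ℝ^d → (d×d real matrices) be smooth with Q(z) skew-symmetric for every z. Define f_i(z) = -∑_{j=1}^d (D_{ij}(z) + Q_{ij}(z)) ∂H/∂z_j(z) + ∑_{j=1}^d ∂/∂z_j (D_{ij}(z) + Q_{ij}(z)). Then π(z) = exp(-H(z)) is a stationary solution of the Fokker–Planck equation: for every z ∈ ℝ^d, ∑_{i,j=1}^d ∂²/∂z_i∂z_j [D_{ij}(z) e^{-H(z)}] - ∑_{i=1}^d ∂/∂z_i [f_i(z) e^{-H(z)}] = 0. -/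

import Mathlib

open scoped BigOperators
open Matrix

/-- Classical partial derivative in the `i`-th coordinate direction. -/
noncomputable def pd {ι : Type*} [Fintype ι] [DecidableEq ι]
    (i : ι) (f : (ι → ℝ) → ℝ) (z : ι → ℝ) : ℝ :=
  fderiv ℝ f z (Pi.single i 1)

/-!
By the product rule, the drift satisfies `f π = ∇ · ((D + Q) π)` for `π = exp (-H)`, with the
divergence taken along rows. Hence the right-hand side of the Fokker–Planck equation is
`∇ · ∇ · (D π) - ∇ · ∇ · ((D + Q) π) = -∇ · ∇ · (Q π)`, and this vanishes because a symmetric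
Hessian operator is contracted with the skew-symmetric matrix `Q π`.
-/

section PartialDerivative

variable {ι : Type*} [Fintype ι] [DecidableEq ι] {f g : (ι → ℝ) → ℝ} {z : ι → ℝ}

theorem pd_add (i : ι) (hf : DifferentiableAt ℝ f z) (hg : DifferentiableAt ℝ g z) :
    pd i (f + g) z = pd i f z + pd i g z := by
  simp only [pd, fderiv_add hf hg, _root_.add_apply]

theorem pd_neg (i : ι) (f : (ι → ℝ) → ℝ) (z : ι → ℝ) : pd i (-f) z = -pd i f z := by
  simp only [pd, fderiv_neg, _root_.neg_apply]

theorem pd_sum {κ : Type*} (i : ι) (s : Finset κ) {F : κ → (ι → ℝ) → ℝ}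
    (hF : ∀ k ∈ s, DifferentiableAt ℝ (F k) z) :
    pd i (fun w => ∑ k ∈ s, F k w) z = ∑ k ∈ s, pd i (F k) z := by
  simp only [pd, fderiv_fun_sum hF, _root_.sum_apply]

theorem pd_mul (i : ι) (hf : DifferentiableAt ℝ f z) (hg : DifferentiableAt ℝ g z) :
    pd i (fun w => f w * g w) z = f z * pd i g z + pd i f z * g z := by
  simp only [pd, fderiv_fun_mul hf hg, _root_.add_apply, _root_.smul_apply, smul_eq_mul,
    mul_comm (g z)]

theorem pd_exp_neg (i : ι) (hf : DifferentiableAt ℝ f z) :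
    pd i (fun w => Real.exp (-f w)) z = -(Real.exp (-f z) * pd i f z) := by
  have hexp : HasFDerivAt (fun w => Real.exp (-f w)) (Real.exp (-f z) • -fderiv ℝ f z) z :=
    hf.hasFDerivAt.neg.exp
  simp only [pd, hexp.fderiv, smul_neg, _root_.neg_apply, _root_.smul_apply, smul_eq_mul]

theorem pd_pd (i j : ι) (hf : DifferentiableAt ℝ (fderiv ℝ f) z) :
    pd i (pd j f) z = fderiv ℝ (fderiv ℝ f) z (Pi.single i 1) (Pi.single j 1) := by
  change fderiv ℝ (fun w => fderiv ℝ f w (Pi.single j 1)) z (Pi.single i 1) = _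
  simp [fderiv_clm_apply hf (differentiableAt_const _)]

theorem pd_comm (i j : ι) (hf : ContDiffAt ℝ 2 f z) : pd i (pd j f) z = pd j (pd i f) z := by
  have hf' : DifferentiableAt ℝ (fderiv ℝ f) z :=
    (hf.fderiv_right (m := 1) (by norm_num)).differentiableAt one_ne_zero
  rw [pd_pd i j hf', pd_pd j i hf']
  exact hf.isSymmSndFDerivAt (by simp) _ _

theorem differentiable_pd (i : ι) (hf : ContDiff ℝ 2 f) : Differentiable ℝ (pd i f) :=
  ((hf.fderiv_right (m := 1) (by norm_num)).differentiable one_ne_zero).clm_apply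
    (differentiable_const _)

theorem sum_pd_mul_exp_neg {a : ι → (ι → ℝ) → ℝ} {H : (ι → ℝ) → ℝ}
    (ha : ∀ j, DifferentiableAt ℝ (a j) z) (hH : DifferentiableAt ℝ H z) :
    ∑ j, pd j (fun w => a j w * Real.exp (-H w)) z =
      (-∑ j, a j z * pd j H z + ∑ j, pd j (a j) z) * Real.exp (-H z) := by
  rw [← Finset.sum_neg_distrib, ← Finset.sum_add_distrib, Finset.sum_mul]
  refine Finset.sum_congr rfl fun j _ => ?_
  rw [pd_mul j (ha j) hH.fun_neg.exp, pd_exp_neg j hH]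
  ring

end PartialDerivative

section DoubleDivergence

variable {ι : Type*} [Fintype ι] [DecidableEq ι] {A B : ι → ι → (ι → ℝ) → ℝ}

/-- The double divergence `∇ · ∇ · A = ∑ i, ∑ j, ∂ᵢ ∂ⱼ Aᵢⱼ` of a matrix field, which gives the
second-order part of the Fokker–Planck operator. The field is encoded by its entries, so that
`A i j` is a scalar function of the point. -/
noncomputable def doubleDivergence (A : ι → ι → (ι → ℝ) → ℝ) (z : ι → ℝ) : ℝ :=
  ∑ i, ∑ j, pd i (pd j (A i j)) z

theorem sum_pd_sum_pd_eq_doubleDivergence (hA : ∀ i j, ContDiff ℝ 2 (A i j)) (z : ι → ℝ) :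
    ∑ i, pd i (fun w => ∑ j, pd j (A i j) w) z = doubleDivergence A z :=
  Finset.sum_congr rfl fun i _ => pd_sum i _ fun j _ => differentiable_pd j (hA i j) z

theorem doubleDivergence_add (hA : ∀ i j, ContDiff ℝ 2 (A i j))
    (hB : ∀ i j, ContDiff ℝ 2 (B i j)) (z : ι → ℝ) :
    doubleDivergence (A + B) z = doubleDivergence A z + doubleDivergence B z := by
  have pd_pd_add (i j : ι) :
      pd i (pd j (A i j + B i j)) z = pd i (pd j (A i j)) z + pd i (pd j (B i j)) z := by
    have pd_entry : pd j (A i j + B i j) = pd j (A i j) + pd j (B i j) :=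
      funext fun w => pd_add j ((hA i j).differentiable two_ne_zero w)
        ((hB i j).differentiable two_ne_zero w)
    rw [pd_entry, pd_add i (differentiable_pd j (hA i j) z) (differentiable_pd j (hB i j) z)]
  simp only [doubleDivergence, Pi.add_apply, pd_pd_add, Finset.sum_add_distrib]

theorem doubleDivergence_neg (A : ι → ι → (ι → ℝ) → ℝ) (z : ι → ℝ) :
    doubleDivergence (-A) z = -doubleDivergence A z := by
  have pd_entry (i j : ι) : pd j (-A i j) = -pd j (A i j) := funext (pd_neg j (A i j))
  simp only [doubleDivergence, Pi.neg_apply, pd_entry, pd_neg, Finset.sum_neg_distrib]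

theorem doubleDivergence_swap (hA : ∀ i j, ContDiff ℝ 2 (A i j)) (z : ι → ℝ) :
    doubleDivergence (fun i j => A j i) z = doubleDivergence A z :=
  calc ∑ i, ∑ j, pd i (pd j (A j i)) z
      = ∑ j, ∑ i, pd i (pd j (A j i)) z := Finset.sum_comm
    _ = ∑ j, ∑ i, pd j (pd i (A j i)) z :=
      Finset.sum_congr rfl fun j _ => Finset.sum_congr rfl fun i _ =>
        pd_comm i j (hA j i).contDiffAt

theorem doubleDivergence_eq_zero_of_skew (hA : ∀ i j, ContDiff ℝ 2 (A i j))
    (hskew : ∀ i j, A j i = -A i j) (z : ι → ℝ) : doubleDivergence A z = 0 := by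
  refine self_eq_neg.mp ?_
  calc doubleDivergence A z
      = doubleDivergence (fun i j => A j i) z := (doubleDivergence_swap hA z).symm
    _ = doubleDivergence (-A) z := by rw [funext₂ hskew]; rfl
    _ = -doubleDivergence A z := doubleDivergence_neg A z

end DoubleDivergence

theorem exp_neg_H_stationary_general {ι : Type*} [Fintype ι] [DecidableEq ι]
    {H : (ι → ℝ) → ℝ} (hH : ContDiff ℝ 2 H) {D Q : (ι → ℝ) → Matrix ι ι ℝ}
    (hD : ∀ i j, ContDiff ℝ 2 (fun z => D z i j))
    (hQ : ∀ i j, ContDiff ℝ 2 (fun z => Q z i j))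
    (hQskew : ∀ z, (Q z)ᵀ = -Q z)
    {f : (ι → ℝ) → ι → ℝ}
    (hf : ∀ z i, f z i =
      -∑ j, (D z i j + Q z i j) * pd j H z
        + ∑ j, pd j (fun w => D w i j + Q w i j) z)
    (z : ι → ℝ) :
    ∑ i, ∑ j, pd i (fun w => pd j (fun u => D u i j * Real.exp (-H u)) w) z
      - ∑ i, pd i (fun w => f w i * Real.exp (-H w)) z = 0 := by
  let Dπ : ι → ι → (ι → ℝ) → ℝ := fun i j u => D u i j * Real.exp (-H u)
  let Qπ : ι → ι → (ι → ℝ) → ℝ := fun i j u => Q u i j * Real.exp (-H u)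
  have hDπ (i j : ι) : ContDiff ℝ 2 (Dπ i j) := (hD i j).mul hH.neg.exp
  have hQπ (i j : ι) : ContDiff ℝ 2 (Qπ i j) := (hQ i j).mul hH.neg.exp
  have hsum (i j : ι) : ContDiff ℝ 2 ((Dπ + Qπ) i j) := (hDπ i j).add (hQπ i j)
  have flux_eq (i : ι) :
      (fun w => f w i * Real.exp (-H w)) = fun w => ∑ j, pd j ((Dπ + Qπ) i j) w := by
    funext w
    rw [hf, ← sum_pd_mul_exp_neg
      (fun j => ((hD i j).add (hQ i j)).differentiable two_ne_zero w)
      (hH.differentiable two_ne_zero w)]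
    simp only [add_mul]
    rfl
  have hQπ_skew (i j : ι) : Qπ j i = -Qπ i j := funext fun u => by
    have : Q u j i = -Q u i j := congrFun₂ (hQskew u) i j
    simp only [Qπ, Pi.neg_apply, this, neg_mul]
  change doubleDivergence Dπ z - _ = 0
  simp only [flux_eq]
  rw [sum_pd_sum_pd_eq_doubleDivergence hsum, doubleDivergence_add hDπ hQπ,
    doubleDivergence_eq_zero_of_skew hQπ hQπ_skew, add_zero, sub_self]

/-- `π(z) = exp(-H(z))` is a stationary solution of the Fokker–Planck equation
associated with the complete-recipe drift. -/
theorem exp_neg_H_stationary {d : ℕ} (hd : 1 ≤ d)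
    (H : (Fin d → ℝ) → ℝ) (hH : ContDiff ℝ (⊤ : ℕ∞) H)
    (D Q : (Fin d → ℝ) → Matrix (Fin d) (Fin d) ℝ)
    (hD : ∀ i j, ContDiff ℝ (⊤ : ℕ∞) (fun z => D z i j))
    (hDsymm : ∀ z, (D z)ᵀ = D z)
    (hQ : ∀ i j, ContDiff ℝ (⊤ : ℕ∞) (fun z => Q z i j))
    (hQskew : ∀ z, (Q z)ᵀ = -Q z)
    (f : (Fin d → ℝ) → Fin d → ℝ)
    (hf : ∀ z i, f z i =
      -∑ j, (D z i j + Q z i j) * pd j H z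
        + ∑ j, pd j (fun w => D w i j + Q w i j) z)
    (z : Fin d → ℝ) :
    ∑ i, ∑ j, pd i (fun w => pd j (fun u => D u i j * Real.exp (-H u)) w) z
      - ∑ i, pd i (fun w => f w i * Real.exp (-H w)) z = 0 :=
  exp_neg_H_stationary_general (contDiff_infty.mp hH 2) (fun i j => contDiff_infty.mp (hD i j) 2)
    (fun i j => contDiff_infty.mp (hQ i j) 2) hQskew hf z
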